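/- For every n ≥ 1, almost surely ‖S_n − S_{n−1}‖ ≤ 2 and E[‖S_n − S_{n−1}‖² | F_{n−1}] ≤ 2^{p+1}·λ_n^p·(v + ‖μ − Ẑ_n‖^p). -/

import Mathlib

open MeasureTheory
open scoped Classical

/-- `truncB x = min(1, ‖x‖)/‖x‖` for `x ≠ 0`, and `truncB 0 = 1`; so `truncB x • x` is the
projection of `x` onto the closed unit ball. -/
noncomputable def truncB {B : Type*} [NormedAddCommGroup B] (x : B) : ℝ :=
  if x = 0 then 1 else min 1 ‖x‖ / ‖x‖

/-- `K_p = (1/p) ((p-1)/p)^{p-1}`. -/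
noncomputable def Kp (p : ℝ) : ℝ := (1 / p) * ((p - 1) / p) ^ (p - 1)

/-- `𝔠_p(ρ) = 2^{p+1} (e^{2ρ} - 2ρ - 1)/(2ρ)²`. -/
noncomputable def frakC (p ρ : ℝ) : ℝ :=
  2 ^ (p + 1) * (Real.exp (2 * ρ) - 2 * ρ - 1) / (2 * ρ) ^ 2


theorem truncB_eq {B : Type*} [NormedAddCommGroup B] (x : B) : truncB x = (max 1 ‖x‖)⁻¹ := by
  unfold truncB
  split_ifs with h
  · simp [h]
  · have h0 : 0 < ‖x‖ := norm_pos_iff.2 h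
    rcases le_total 1 ‖x‖ with h1 | h1
    · rw [min_eq_left h1, max_eq_right h1, one_div]
    · rw [min_eq_right h1, max_eq_left h1, div_self h0.ne', inv_one]

theorem norm_W_le_one {B : Type*} [NormedAddCommGroup B] [NormedSpace ℝ B] (l : ℝ) (y : B) :
    ‖l • (truncB (l • y) • y)‖ ≤ 1 := by
  rw [smul_comm, truncB_eq, norm_smul, norm_inv, Real.norm_of_nonneg (by positivity)]
  have h : 0 < max 1 ‖l • y‖ := by positivity
  rw [inv_mul_le_iff₀ h, mul_one]
  exact le_max_right _ _

theorem norm_W_le {B : Type*} [NormedAddCommGroup B] [NormedSpace ℝ B] (l : ℝ) (hl : 0 < l)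
    (y : B) : ‖l • (truncB (l • y) • y)‖ ≤ l * ‖y‖ := by
  rw [smul_comm, truncB_eq, norm_smul, norm_inv, Real.norm_of_nonneg (by positivity)]
  have h : 0 < max 1 ‖l • y‖ := by positivity
  rw [inv_mul_le_iff₀ h, norm_smul, Real.norm_of_nonneg hl.le]
  exact le_mul_of_one_le_left (by positivity) (le_max_left _ _)

theorem real_rpow_add_le (a b p : ℝ) (ha : 0 ≤ a) (hb : 0 ≤ b) (hp : 1 ≤ p) :
    (a + b) ^ p ≤ 2 ^ (p - 1) * (a ^ p + b ^ p) := by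
  lift a to NNReal using ha
  lift b to NNReal using hb
  exact_mod_cast NNReal.rpow_add_le_mul_rpow_add_rpow a b hp

theorem W_sq_le {B : Type*} [NormedAddCommGroup B] [NormedSpace ℝ B] (l p : ℝ) (hl : 0 < l)
    (hp1 : 1 < p) (hp2 : p ≤ 2) (x μ z : B) :
    ‖l • (truncB (l • (x - z)) • (x - z))‖ ^ 2 ≤
      2 ^ (p - 1) * (l ^ p * ‖x - μ‖ ^ p + l ^ p * ‖μ - z‖ ^ p) := by
  have h1 := norm_W_le_one l (x - z)
  have h2 := norm_W_le l hl (x - z)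
  set w := ‖l • (truncB (l • (x - z)) • (x - z))‖
  have hw : 0 ≤ w := norm_nonneg _
  calc w ^ 2 = w ^ (2 : ℝ) := by norm_cast
    _ ≤ w ^ p := Real.rpow_le_rpow_of_exponent_ge_of_imp hw h1 hp2 (by intros; linarith)
    _ ≤ (l * ‖x - z‖) ^ p := Real.rpow_le_rpow hw h2 (by linarith)
    _ = l ^ p * ‖x - z‖ ^ p := Real.mul_rpow hl.le (norm_nonneg _)
    _ ≤ l ^ p * (‖x - μ‖ + ‖μ - z‖) ^ p := by
        gcongr
        calc ‖x - z‖ = ‖(x - μ) + (μ - z)‖ := by rw [sub_add_sub_cancel]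
          _ ≤ _ := norm_add_le _ _
    _ ≤ l ^ p * (2 ^ (p - 1) * (‖x - μ‖ ^ p + ‖μ - z‖ ^ p)) := by
        gcongr
        exact real_rpow_add_le _ _ _ (norm_nonneg _) (norm_nonneg _) hp1.le
    _ = _ := by ring

theorem integrable_of_bdd {B : Type*} [NormedAddCommGroup B]
    {Ω : Type*} {mΩ : MeasurableSpace Ω} {P : Measure Ω} [IsProbabilityMeasure P]
    {f : Ω → B} (hf : AEStronglyMeasurable f P) (c : ℝ) (h : ∀ᵐ ω ∂P, ‖f ω‖ ≤ c) :
    Integrable f P := Integrable.of_bound hf c h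

theorem condexp_D {B : Type*} [NormedAddCommGroup B]
    {Ω : Type*} {m mΩ : MeasurableSpace Ω} {P : Measure Ω} [IsProbabilityMeasure P] (hm : m ≤ mΩ)
    (W C D : Ω → B) (hW : StronglyMeasurable W) (hW1 : ∀ ω, ‖W ω‖ ≤ 1)
    (hC : StronglyMeasurable[m] C) (hC1 : ∀ᵐ ω ∂P, ‖C ω‖ ≤ 1)
    (hC2 : ∀ᵐ ω ∂P, ‖C ω‖ ^ 2 ≤ (P[fun ω' => ‖W ω'‖ ^ 2 | m]) ω)
    (hD : ∀ᵐ ω ∂P, D ω = W ω - C ω) :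
    (∀ᵐ ω ∂P, ‖D ω‖ ≤ 2) ∧
    ∀ᵐ ω ∂P, (P[fun ω' => ‖D ω'‖ ^ 2 | m]) ω ≤ 4 * (P[fun ω' => ‖W ω'‖ ^ 2 | m]) ω := by
  have hWi : Integrable (fun ω => 2 * ‖W ω‖ ^ 2) P := by
    refine integrable_of_bdd ((hW.norm.pow 2).const_mul 2).aestronglyMeasurable 2 (ae_of_all _ ?_)
    intro ω
    rw [Real.norm_of_nonneg (by positivity)]
    nlinarith [hW1 ω, norm_nonneg (W ω)]
  have hCm : StronglyMeasurable[m] (fun ω => 2 * ‖C ω‖ ^ 2) := (hC.norm.pow 2).const_mul 2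
  have hCi : Integrable (fun ω => 2 * ‖C ω‖ ^ 2) P := by
    refine integrable_of_bdd (hCm.mono hm).aestronglyMeasurable 2 ?_
    filter_upwards [hC1] with ω h
    rw [Real.norm_of_nonneg (by positivity)]
    nlinarith [norm_nonneg (C ω)]
  have hD2 : ∀ᵐ ω ∂P, ‖D ω‖ ≤ 2 := by
    filter_upwards [hC1, hD] with ω h h'
    rw [h']
    linarith [norm_sub_le (W ω) (C ω), hW1 ω]
  refine ⟨hD2, ?_⟩
  have hDm : AEStronglyMeasurable D P :=
    (hW.sub (hC.mono hm)).aestronglyMeasurable.congr (hD.mono fun ω h => h.symm)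
  have hDi : Integrable (fun ω => ‖D ω‖ ^ 2) P := by
    refine integrable_of_bdd (hDm.norm.pow 2) 4 ?_
    filter_upwards [hD2] with ω h
    rw [Real.norm_of_nonneg (by positivity)]
    nlinarith [norm_nonneg (D ω)]
  have hmono : P[fun ω => ‖D ω‖ ^ 2 | m] ≤ᵐ[P]
      P[(fun ω => 2 * ‖W ω‖ ^ 2) + fun ω => 2 * ‖C ω‖ ^ 2 | m] := by
    refine condExp_mono hDi (hWi.add hCi) ?_
    filter_upwards [hD] with ω h'
    simp only [Pi.add_apply]
    rw [h']
    have := norm_sub_le (W ω) (C ω)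
    nlinarith [norm_nonneg (W ω - C ω), sq_nonneg (‖W ω‖ - ‖C ω‖), norm_nonneg (W ω),
      norm_nonneg (C ω)]
  have hsm : P[fun ω => 2 * ‖W ω‖ ^ 2 | m] =ᵐ[P] (2 : ℝ) • P[fun ω => ‖W ω‖ ^ 2 | m] :=
    condExp_smul (2 : ℝ) (fun ω => ‖W ω‖ ^ 2) m
  have hCe : P[fun ω => 2 * ‖C ω‖ ^ 2 | m] = fun ω => 2 * ‖C ω‖ ^ 2 :=
    condExp_of_stronglyMeasurable hm hCm hCi
  filter_upwards [hmono, condExp_add hWi hCi m, hsm, hC2] with ω h1 h2 h3 h4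
  rw [h2, Pi.add_apply, h3, hCe] at h1
  simp only [Pi.smul_apply, smul_eq_mul] at h1
  linarith

theorem condexp_W {Ω : Type*} {m mΩ : MeasurableSpace Ω} {P : Measure Ω} [IsProbabilityMeasure P]
    (hm : m ≤ mΩ) (w q a b : Ω → ℝ) (k v : ℝ) (hk : 0 ≤ k)
    (hw : Integrable w P) (hq : Integrable q P)
    (ha : StronglyMeasurable[m] a) (hb : StronglyMeasurable[m] b)
    (ha0 : ∀ ω, 0 ≤ a ω) (hb0 : ∀ ω, 0 ≤ b ω)
    (hle : ∀ ω, w ω ≤ k * (a ω * q ω + a ω * b ω))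
    (hqv : ∀ᵐ ω ∂P, (P[q | m]) ω ≤ v) :
    ∀ᵐ ω ∂P, (P[w | m]) ω ≤ k * a ω * (v + b ω) := by
  set g : Ω → ℝ := fun ω => (1 + a ω + a ω * b ω)⁻¹ with hg
  have hpos : ∀ ω, 0 < 1 + a ω + a ω * b ω := fun ω => by
    have := ha0 ω; have := mul_nonneg (ha0 ω) (hb0 ω); linarith
  have hgpos : ∀ ω, 0 < g ω := fun ω => inv_pos.2 (hpos ω)
  have hgm : StronglyMeasurable[m] g := by
    apply Measurable.stronglyMeasurable
    exact ((measurable_const.add ha.measurable).add (ha.measurable.mul hb.measurable)).inv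
  have hgam : StronglyMeasurable[m] (fun ω => k * (g ω * a ω)) := (hgm.mul ha).const_mul k
  have hgabm : StronglyMeasurable[m] (fun ω => k * (g ω * (a ω * b ω))) :=
    (hgm.mul (ha.mul hb)).const_mul k
  have hg1 : ∀ ω, ‖g ω‖ ≤ 1 := fun ω => by
    rw [Real.norm_of_nonneg (hgpos ω).le]
    apply inv_le_one_of_one_le₀
    have := ha0 ω; have := mul_nonneg (ha0 ω) (hb0 ω); linarith
  have hga1 : ∀ ω, ‖k * (g ω * a ω)‖ ≤ k := fun ω => by
    rw [Real.norm_of_nonneg (mul_nonneg hk (mul_nonneg (hgpos ω).le (ha0 ω)))]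
    refine mul_le_of_le_one_right hk ?_
    rw [hg, inv_mul_le_iff₀ (hpos ω)]
    have := ha0 ω; have := mul_nonneg (ha0 ω) (hb0 ω); linarith
  have hgab1 : ∀ ω, ‖k * (g ω * (a ω * b ω))‖ ≤ k := fun ω => by
    rw [Real.norm_of_nonneg
      (mul_nonneg hk (mul_nonneg (hgpos ω).le (mul_nonneg (ha0 ω) (hb0 ω))))]
    refine mul_le_of_le_one_right hk ?_
    rw [hg, inv_mul_le_iff₀ (hpos ω)]
    have := ha0 ω; have := mul_nonneg (ha0 ω) (hb0 ω); linarith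
  have e1 := condExp_stronglyMeasurable_mul_of_bound hm hgm hw 1 (ae_of_all P hg1)
  have e2 := condExp_stronglyMeasurable_mul_of_bound hm hgam hq k (ae_of_all P hga1)
  have i1 : Integrable (g * w) P :=
    hw.bdd_mul (hgm.mono hm).aestronglyMeasurable (ae_of_all P hg1)
  have i2 : Integrable ((fun ω => k * (g ω * a ω)) * q) P :=
    hq.bdd_mul (hgam.mono hm).aestronglyMeasurable (ae_of_all P hga1)
  have i3 : Integrable (fun ω => k * (g ω * (a ω * b ω))) P :=
    integrable_of_bdd (hgabm.mono hm).aestronglyMeasurable k (ae_of_all P hgab1)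
  have e3 : P[fun ω => k * (g ω * (a ω * b ω)) | m] = fun ω => k * (g ω * (a ω * b ω)) :=
    condExp_of_stronglyMeasurable hm hgabm i3
  have hmono : P[g * w | m] ≤ᵐ[P]
      P[(fun ω => k * (g ω * a ω)) * q + fun ω => k * (g ω * (a ω * b ω)) | m] := by
    refine condExp_mono i1 (i2.add i3) (ae_of_all _ fun ω => ?_)
    simp only [Pi.add_apply, Pi.mul_apply]
    have := mul_le_mul_of_nonneg_left (hle ω) (hgpos ω).le
    linarith
  filter_upwards [hmono, condExp_add i2 i3 m, e1, e2, hqv] with ω h1 h2 h3 h4 h5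
  rw [h2, Pi.add_apply, h3, h4, e3] at h1
  simp only [Pi.mul_apply] at h1
  have h6 : k * (g ω * a ω) * (P[q | m]) ω ≤ k * (g ω * a ω) * v :=
    mul_le_mul_of_nonneg_left h5 (mul_nonneg hk (mul_nonneg (hgpos ω).le (ha0 ω)))
  have h7 : g ω * (P[w | m]) ω ≤ g ω * (k * a ω * (v + b ω)) := by linarith
  exact le_of_mul_le_mul_left h7 (hgpos ω)

/-- **Increment bounds for the truncated martingale `S`.** For every `n ≥ 1`, almost surely
`‖Sₙ - S_{n-1}‖ ≤ 2` and `E[‖Sₙ - S_{n-1}‖² | F_{n-1}] ≤ 2^{p+1} λₙ^p (v + ‖μ - Ẑₙ‖^p)`. -/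
theorem stmt5
    {B : Type*} [NormedAddCommGroup B] [NormedSpace ℝ B] [CompleteSpace B]
    [TopologicalSpace.SeparableSpace B]
    {Ω : Type*} {mΩ : MeasurableSpace Ω} {P : Measure Ω} [IsProbabilityMeasure P]
    (ℱ : Filtration ℕ mΩ) (X : ℕ → Ω → B) (μ : B) (p v : ℝ)
    (hp1 : 1 < p) (hp2 : p ≤ 2) (hv : 0 < v)
    (hadapted : ∀ n : ℕ, 1 ≤ n → StronglyMeasurable[ℱ n] (X n))
    (hint : ∀ n : ℕ, 1 ≤ n → Integrable (X n) P)
    (hmom : ∀ n : ℕ, 1 ≤ n → Integrable (fun ω => ‖X n ω‖ ^ p) P)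
    (hcondmean : ∀ n : ℕ, P[X (n + 1) | ℱ n] =ᵐ[P] fun _ => μ)
    (hcondmom : ∀ n : ℕ, ∀ᵐ ω ∂P, (P[fun ω' => ‖X (n + 1) ω' - μ‖ ^ p | ℱ n]) ω ≤ v)
    (Z : ℕ → Ω → B) (hZpred : ∀ n : ℕ, StronglyMeasurable[ℱ n] (Z (n + 1)))
    (lam : ℕ → Ω → ℝ) (hlampred : ∀ n : ℕ, StronglyMeasurable[ℱ n] (lam (n + 1)))
    (hlampos : ∀ n ω, 0 < lam n ω)
    (S : ℕ → Ω → B)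
    (hS : ∀ n ω, S n ω = ∑ m ∈ Finset.range n,
      lam (m + 1) ω •
        (truncB (lam (m + 1) ω • (X (m + 1) ω - Z (m + 1) ω)) • (X (m + 1) ω - Z (m + 1) ω)
          + Z (m + 1) ω
          - ((P[fun ω' => truncB (lam (m + 1) ω' • (X (m + 1) ω' - Z (m + 1) ω')) •
                (X (m + 1) ω' - Z (m + 1) ω') | ℱ m]) ω + Z (m + 1) ω)))
    (n : ℕ) :
    (∀ᵐ ω ∂P, ‖S (n + 1) ω - S n ω‖ ≤ 2) ∧
      (∀ᵐ ω ∂P, (P[fun ω' => ‖S (n + 1) ω' - S n ω'‖ ^ 2 | ℱ n]) ω ≤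
        2 ^ (p + 1) * lam (n + 1) ω ^ p * (v + ‖μ - Z (n + 1) ω‖ ^ p)) := by
  have hm := ℱ.le n
  set T : Ω → B := fun ω => truncB (lam (n + 1) ω • (X (n + 1) ω - Z (n + 1) ω)) •
    (X (n + 1) ω - Z (n + 1) ω) with hT
  set l : Ω → ℝ := lam (n + 1) with hl
  set W : Ω → B := fun ω => l ω • T ω with hWdef
  have hXm : StronglyMeasurable (X (n + 1)) := (hadapted (n + 1) (by omega)).mono (ℱ.le _)
  have hYm : StronglyMeasurable (fun ω => X (n + 1) ω - Z (n + 1) ω) :=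
    hXm.sub ((hZpred n).mono hm)
  have hlm : StronglyMeasurable l := (hlampred n).mono hm
  have hTm : StronglyMeasurable T := by
    have : T = fun ω => (max 1 ‖l ω • (X (n + 1) ω - Z (n + 1) ω)‖)⁻¹ •
        (X (n + 1) ω - Z (n + 1) ω) := by
      funext ω
      simp only [hT, truncB_eq, hl]
    rw [this]
    refine StronglyMeasurable.smul ?_ hYm
    apply Measurable.stronglyMeasurable
    exact (measurable_const.max (hlm.smul hYm).norm.measurable).inv
  have hWm : StronglyMeasurable W := hlm.smul hTm
  have hW1 : ∀ ω, ‖W ω‖ ≤ 1 := fun ω => norm_W_le_one _ _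
  have hWi : Integrable W P := integrable_of_bdd hWm.aestronglyMeasurable 1 (ae_of_all _ hW1)
  have hW2i : Integrable (fun ω => ‖W ω‖ ^ 2) P := by
    refine integrable_of_bdd (hWm.norm.pow 2).aestronglyMeasurable 1 (ae_of_all _ fun ω => ?_)
    rw [Real.norm_of_nonneg (by positivity)]
    nlinarith [hW1 ω, norm_nonneg (W ω)]
  have hSd : ∀ ω, S (n + 1) ω - S n ω = W ω - l ω • (P[T | ℱ n]) ω := by
    intro ω
    rw [hS (n + 1), hS n, Finset.sum_range_succ, add_sub_cancel_left, add_sub_add_right_eq_sub,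
      smul_sub]
  have hC : ∃ C : Ω → B, StronglyMeasurable[ℱ n] C ∧ (∀ᵐ ω ∂P, ‖C ω‖ ≤ 1) ∧
      (∀ᵐ ω ∂P, ‖C ω‖ ^ 2 ≤ (P[fun ω' => ‖W ω'‖ ^ 2 | ℱ n]) ω) ∧
      (∀ᵐ ω ∂P, S (n + 1) ω - S n ω = W ω - C ω) := by
    by_cases hTi : Integrable T P
    · refine ⟨P[W | ℱ n], stronglyMeasurable_condExp, ?_, ?_, ?_⟩
      · have h2 : P[(‖W ·‖) | ℱ n] ≤ᵐ[P] P[fun _ => (1 : ℝ) | ℱ n] :=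
          condExp_mono hWi.norm (integrable_const _) (ae_of_all _ hW1)
        rw [condExp_const hm] at h2
        filter_upwards [norm_condExp_le (μ := P) (m := ℱ n) W, h2] with ω h h'
        exact h.trans h'
      · have hfi : Integrable (fun ω => ‖W ω‖ ^ (2 : ℝ)) P := by
          simpa only [Real.rpow_two] using hW2i
        have := Integrable.norm_condExp_rpow_le (m := ℱ n) (p := 2) (by norm_num) hfi
        simp only [Real.rpow_two] at this
        exact this
      · have := condExp_smul_of_aestronglyMeasurable_left (μ := P) (m := ℱ n) (f := l) (g := T)
          (hlampred n).aestronglyMeasurable hWi hTi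
        filter_upwards [this] with ω h
        rw [hSd ω]
        congr 1
        exact h.symm
    · refine ⟨fun _ => 0, stronglyMeasurable_const, by simp, ?_, ?_⟩
      · have : 0 ≤ᵐ[P] P[fun ω' => ‖W ω'‖ ^ 2 | ℱ n] :=
          condExp_nonneg (ae_of_all _ fun ω => by positivity)
        filter_upwards [this] with ω h
        simpa using h
      · refine ae_of_all _ fun ω => ?_
        rw [hSd, condExp_of_not_integrable hTi]
        simp
  obtain ⟨C, hCm, hC1, hC2, hCD⟩ := hC
  obtain ⟨hA, hB⟩ := condexp_D hm W C (fun ω => S (n + 1) ω - S n ω) hWm hW1 hCm hC1 hC2 hCD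
  refine ⟨hA, ?_⟩
  have hqm : StronglyMeasurable (fun ω => ‖X (n + 1) ω - μ‖ ^ p) :=
    ((hXm.sub stronglyMeasurable_const).norm.measurable.pow_const p).stronglyMeasurable
  have hq : Integrable (fun ω => ‖X (n + 1) ω - μ‖ ^ p) P := by
    refine Integrable.mono'
      (((hmom (n + 1) (by omega)).add (integrable_const (‖μ‖ ^ p))).const_mul (2 ^ (p - 1)))
      hqm.aestronglyMeasurable (ae_of_all _ fun ω => ?_)
    rw [Real.norm_of_nonneg (by positivity)]
    exact (Real.rpow_le_rpow (norm_nonneg _) (norm_sub_le _ _) (by linarith)).trans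
      (real_rpow_add_le _ _ _ (norm_nonneg _) (norm_nonneg _) hp1.le)
  have key := condexp_W (P := P) hm (fun ω => ‖W ω‖ ^ 2) (fun ω => ‖X (n + 1) ω - μ‖ ^ p)
    (fun ω => l ω ^ p) (fun ω => ‖μ - Z (n + 1) ω‖ ^ p) (2 ^ (p - 1)) v (by positivity) hW2i hq
    ((hlampred n).measurable.pow_const p).stronglyMeasurable
    ((stronglyMeasurable_const.sub (hZpred n)).norm.measurable.pow_const p).stronglyMeasurable
    (fun ω => Real.rpow_nonneg (hlampos _ _).le _) (fun ω => by positivity)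
    (fun ω => W_sq_le _ _ (hlampos _ _) hp1 hp2 _ _ _) (hcondmom n)
  filter_upwards [hB, key] with ω h1 h2
  have h3 : (2 : ℝ) ^ (p + 1) = 4 * 2 ^ (p - 1) := by
    rw [show p + 1 = 2 + (p - 1) by ring, Real.rpow_add (by norm_num)]
    norm_num
  rw [h3]
  linarith
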